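/- Let T > 0, b > 0 and q ≥ 0, and define S : [0,T] → ℝ by S(t) = b·((b+q)·e^{b(T−t)} − (b−q)·e^{−b(T−t)}) / ((b+q)·e^{b(T−t)} + (b−q)·e^{−b(T−t)}). Then the denominator (b+q)·e^{b(T−t)} + (b−q)·e^{−b(T−t)} is strictly positive for every t ∈ [0,T], S is continuously differentiable on [0,T], S satisfies the Riccati equation S'(t) = S(t)² − b² for all t ∈ [0,T], and S(T) = q. -/

import Mathlib

open Real

/-!
Write `S = N / D` with `D = (b + q) e^{b(T-t)} + (b - q) e^{-b(T-t)}` and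
`N = b ((b + q) e^{b(T-t)} - (b - q) e^{-b(T-t)})`. Then `D' = -N` and `N' = -b² D`, so
`S' = (N' D - N D') / D² = (N² - b² D²) / D² = S² - b²` wherever `D ≠ 0`. On `[0,T]` the
denominator is positive because `D = b (e^x + e^{-x}) + q (e^x - e^{-x})` with `x = b(T-t) ≥ 0`.
-/

/-- The explicit solution of the scalar Riccati terminal-value problem
`Ṡ = S² − b²`, `S(T) = q`: positivity of the denominator, continuous
differentiability, the Riccati equation on `[0,T]`, and the terminal condition. -/
theorem stmt_0 (T b q : ℝ) (hT : 0 < T) (hb : 0 < b) (hq : 0 ≤ q)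
    (S : ℝ → ℝ)
    (hS : ∀ t, S t = b * ((b + q) * exp (b * (T - t)) - (b - q) * exp (-(b * (T - t)))) /
      ((b + q) * exp (b * (T - t)) + (b - q) * exp (-(b * (T - t))))) :
    (∀ t ∈ Set.Icc (0:ℝ) T,
      0 < (b + q) * exp (b * (T - t)) + (b - q) * exp (-(b * (T - t)))) ∧
    ContDiffOn ℝ 1 S (Set.Icc 0 T) ∧
    (∀ t ∈ Set.Icc (0:ℝ) T, HasDerivWithinAt S (S t ^ 2 - b ^ 2) (Set.Icc 0 T) t) ∧
    S T = q := by
  have hpos : ∀ t ∈ Set.Icc (0:ℝ) T,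
      0 < (b + q) * exp (b * (T - t)) + (b - q) * exp (-(b * (T - t))) := by
    intro t ht
    have hx : 0 ≤ b * (T - t) := mul_nonneg hb.le (sub_nonneg.2 ht.2)
    have hle : exp (-(b * (T - t))) ≤ exp (b * (T - t)) := exp_le_exp.2 (by linarith)
    have h1 := mul_pos hb (exp_pos (b * (T - t)))
    have h2 := mul_pos hb (exp_pos (-(b * (T - t))))
    have h3 := mul_nonneg hq (sub_nonneg.2 hle)
    linarith
  have hfun := funext hS
  refine ⟨hpos, ?_, ?_, ?_⟩
  · rw [hfun]
    exact ContDiffOn.div (by fun_prop) (by fun_prop) fun t ht => (hpos t ht).ne'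
  · intro t ht
    have hD := (hpos t ht).ne'
    have hlin : HasDerivAt (fun s => b * (T - s)) (-b) t := by
      simpa using ((hasDerivAt_id t).const_sub T).const_mul b
    have hE := hlin.exp.const_mul (b + q)
    have hF := hlin.neg.exp.const_mul (b - q)
    have h := ((hE.sub hF).const_mul b).div (hE.add hF) hD
    refine HasDerivAt.hasDerivWithinAt ?_
    rw [hS t, hfun]
    refine h.congr_deriv ?_
    simp only [Pi.add_apply, Pi.sub_apply, Pi.neg_apply]
    field_simp
    ring
  · rw [hS T]
    simp only [sub_self, mul_zero, neg_zero, exp_zero, mul_one]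
    rw [div_eq_iff (by linarith)]
    ring
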